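/- arXiv:1411.3537 — 4 statements merged into one kernel-verified Lean document; each statement's English description precedes it below -/
import Mathlib

section
/- For every interesting model (with Φ and Ψ as described, which are then defined), the composition Φ∘Ψ is not the identity map of ℂ(x,y). Consequently the group generated by Φ and Ψ has order at least 4. -/
/- STATEMENT 2: For every interesting model, Φ∘Ψ is not the identity map of ℂ(x,y);
consequently the group generated by Φ and Ψ has order at least 4. -/

noncomputable section

/-- The field ℂ(x,y) of rational functions in two variables over ℂ. -/
abbrev RF : Type := FractionRing (MvPolynomial (Fin 2) ℂ)

/-- The element x of ℂ(x,y). -/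
def Xr : RF := algebraMap (MvPolynomial (Fin 2) ℂ) RF (MvPolynomial.X 0)

/-- The element y of ℂ(x,y). -/
def Yr : RF := algebraMap (MvPolynomial (Fin 2) ℂ) RF (MvPolynomial.X 1)

/-- The constant c in ℂ(x,y). -/
def Cr (c : ℂ) : RF := algebraMap ℂ RF c

/-- A model is interesting if none of the four boundary triples of multiplicities
is the zero triple. -/
def Interesting (a : ℤ → ℤ → ℂ) : Prop :=
  ¬(a 1 (-1) = 0 ∧ a 1 0 = 0 ∧ a 1 1 = 0) ∧
  ¬(a (-1) 1 = 0 ∧ a 0 1 = 0 ∧ a 1 1 = 0) ∧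
  ¬(a (-1) (-1) = 0 ∧ a (-1) 0 = 0 ∧ a (-1) 1 = 0) ∧
  ¬(a (-1) (-1) = 0 ∧ a 0 (-1) = 0 ∧ a 1 (-1) = 0)

/-!
If `r ∈ K(y)`, then `x⁻¹ r = x` would give `x² = r ∈ K(y)`, although `x` is transcendental over
`K(y)`. Hence `Φ` moves `x`, which `Ψ` fixes, so `ΦΨ` moves `x` as well; by symmetry `Ψ` moves `y`.
Therefore `1`, `Φ`, `Ψ` and `ΦΨ` are pairwise distinct.
-/

lemma injective_one_left_right_mul {M : Type*} [CancelMonoid M] {g h : M}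
    (hg : g ≠ 1) (hh : h ≠ 1) (hgh : g ≠ h) (hmul : g * h ≠ 1) :
    Function.Injective ![1, g, h, g * h] := by
  simp only [Matrix.vecCons, Fin.cons_injective_iff, Function.injective_of_subsingleton]
  simp [hg, hh, hgh, hg.symm, hh.symm, hmul.symm]

lemma exists_injective_fin_four_mem_closure_pair {G α : Type*} [Group G] [MulAction G α] {g h : G}
    {x : α} (hgx : g • x ≠ x) (hhx : h • x = x) (hh : h ≠ 1) :
    ∃ f : Fin 4 → G, Function.Injective f ∧ ∀ i, f i ∈ Subgroup.closure {g, h} := by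
  have hg : g ≠ 1 := by
    rintro rfl
    exact hgx (one_smul G x)
  have hgh : g ≠ h := by
    rintro rfl
    exact hgx hhx
  have hmul : g * h ≠ 1 := fun hmul ↦ hgx <| by
    rw [← hhx, smul_smul, hmul, one_smul, hhx]
  have hg_mem : g ∈ Subgroup.closure {g, h} := Subgroup.subset_closure (.inl rfl)
  have hh_mem : h ∈ Subgroup.closure {g, h} := Subgroup.subset_closure (.inr rfl)
  refine ⟨![1, g, h, g * h], injective_one_left_right_mul hg hh hgh hmul, fun i ↦ ?_⟩
  fin_cases i
  exacts [one_mem _, hg_mem, hh_mem, mul_mem hg_mem hh_mem]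

lemma inv_mul_ne_self_of_transcendental_of_isAlgebraic {R F : Type*} [CommRing R] [Field F]
    [Algebra R F] {x r : F} (hx : Transcendental R x) (hr : IsAlgebraic R r) : x⁻¹ * r ≠ x := by
  intro h
  have : Nontrivial R := (algebraMap R F).domain_nontrivial
  have hx0 : x ≠ 0 := by
    rintro rfl
    exact hx isAlgebraic_zero
  have hsq : r = x ^ 2 := by rw [(inv_mul_eq_iff_eq_mul₀ hx0).mp h, sq]
  exact hx.pow two_pos (hsq ▸ hr)

section FieldExtension

open IntermediateField

variable {K L : Type*} [Field K] [Field L] [Algebra K L]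

lemma transcendental_adjoin_singleton_of_algebraicIndependent {ι : Type*} {v : ι → L}
    (hv : AlgebraicIndependent K v) {i j : ι} (hij : i ≠ j) : Transcendental K⟮v j⟯ (v i) := by
  rw [transcendental_adjoin_iff, ← Set.image_singleton]
  exact hv.transcendental_adjoin hij

lemma laurent_div_laurent_mem_adjoin_singleton (y : L) (c₀ c₁ c₂ d₀ d₁ d₂ : K) :
    (algebraMap K L c₀ * y⁻¹ + algebraMap K L c₁ + algebraMap K L c₂ * y) /
      (algebraMap K L d₀ * y⁻¹ + algebraMap K L d₁ + algebraMap K L d₂ * y) ∈ K⟮y⟯ := by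
  have hy : y ∈ K⟮y⟯ := mem_adjoin_simple_self K y
  have laurent_mem (a b c : K) :
      algebraMap K L a * y⁻¹ + algebraMap K L b + algebraMap K L c * y ∈ K⟮y⟯ :=
    add_mem (add_mem (mul_mem (K⟮y⟯.algebraMap_mem a) (inv_mem hy)) (K⟮y⟯.algebraMap_mem b))
      (mul_mem (K⟮y⟯.algebraMap_mem c) hy)
  exact div_mem (laurent_mem c₀ c₁ c₂) (laurent_mem d₀ d₁ d₂)

theorem statement2_general {x y : L} (hxy : AlgebraicIndependent K ![x, y]) (Φ Ψ : L ≃ₐ[K] L)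
    {r s : L} (hr : r ∈ K⟮y⟯) (hs : s ∈ K⟮x⟯)
    (hΦx : Φ x = x⁻¹ * r) (hΨx : Ψ x = x) (hΨy : Ψ y = y⁻¹ * s) :
    (¬ ∀ z : L, Φ (Ψ z) = z) ∧
      ∃ g : Fin 4 → (L ≃ₐ[K] L), Function.Injective g ∧
        ∀ i, g i ∈ Subgroup.closure {Φ, Ψ} := by
  have hx : Transcendental K⟮y⟯ x :=
    transcendental_adjoin_singleton_of_algebraicIndependent (i := 0) (j := 1) hxy zero_ne_one
  have hy : Transcendental K⟮x⟯ y :=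
    transcendental_adjoin_singleton_of_algebraicIndependent (i := 1) (j := 0) hxy one_ne_zero
  have hΦ_moves_x : Φ x ≠ x := hΦx ▸
    inv_mul_ne_self_of_transcendental_of_isAlgebraic hx (isAlgebraic_algebraMap (⟨r, hr⟩ : K⟮y⟯))
  have hΨ_moves_y : Ψ y ≠ y := hΨy ▸
    inv_mul_ne_self_of_transcendental_of_isAlgebraic hy (isAlgebraic_algebraMap (⟨s, hs⟩ : K⟮x⟯))
  have hΨ_ne_one : Ψ ≠ 1 := fun h ↦ hΨ_moves_y (DFunLike.congr_fun h y)
  exact ⟨fun h ↦ hΦ_moves_x (by simpa only [hΨx] using h x),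
    exists_injective_fin_four_mem_closure_pair hΦ_moves_x hΨx hΨ_ne_one⟩

end FieldExtension

lemma algebraicIndependent_Xr_Yr : AlgebraicIndependent ℂ ![Xr, Yr] := by
  have hX := (MvPolynomial.algebraicIndependent_X (Fin 2) ℂ).map'
    (f := IsScalarTower.toAlgHom ℂ (MvPolynomial (Fin 2) ℂ) RF)
    (IsFractionRing.injective (MvPolynomial (Fin 2) ℂ) RF)
  convert hX using 1
  ext i
  fin_cases i <;> rfl

theorem statement2 (a : ℤ → ℤ → ℂ) (hInt : Interesting a)
    (Φ Ψ : RF ≃ₐ[ℂ] RF)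
    (hΦx : Φ Xr = Xr⁻¹ *
      ((Cr (a (-1) (-1)) * Yr⁻¹ + Cr (a (-1) 0) + Cr (a (-1) 1) * Yr) /
        (Cr (a 1 (-1)) * Yr⁻¹ + Cr (a 1 0) + Cr (a 1 1) * Yr)))
    (hΦy : Φ Yr = Yr)
    (hΨx : Ψ Xr = Xr)
    (hΨy : Ψ Yr = Yr⁻¹ *
      ((Cr (a (-1) (-1)) * Xr⁻¹ + Cr (a 0 (-1)) + Cr (a 1 (-1)) * Xr) /
        (Cr (a (-1) 1) * Xr⁻¹ + Cr (a 0 1) + Cr (a 1 1) * Xr))) :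
    (¬ ∀ r : RF, Φ (Ψ r) = r) ∧
      ∃ g : Fin 4 → (RF ≃ₐ[ℂ] RF), Function.Injective g ∧
        ∀ i, g i ∈ Subgroup.closure {Φ, Ψ} :=
  statement2_general algebraicIndependent_Xr_Yr Φ Ψ
    (laurent_div_laurent_mem_adjoin_singleton Yr _ _ _ _ _ _)
    (laurent_div_laurent_mem_adjoin_singleton Xr _ _ _ _ _ _) hΦx hΨx hΨy

end
end

section
/- Let (a_{u,v}) be an interesting model, with Φ and Ψ the associated automorphisms of ℂ(x,y). Then (Φ∘Ψ)³ = id (equivalently, the group of the model is the dihedral group D6) if and only if the multiplicities satisfy one of the following six systems of equations, or one of these systems after the diagonal reflection a_{u,v} ↦ a_{v,u}: (1a) a_{1,1}=a_{-1,-1}=0 and a_{-1,1}a_{1,-1}=a_{-1,0}a_{1,0}=a_{0,1}a_{0,-1}; (1b) a_{1,-1}=a_{-1,1}=0 and a_{-1,0}a_{1,0}=a_{-1,-1}a_{1,1}=a_{0,-1}a_{0,1}; (2a) a_{1,0}=a_{1,1}=0, a_{0,-1}a_{-1,1}=2a_{0,1}a_{-1,-1}, a_{0,-1}²=4a_{1,-1}a_{-1,-1},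 a_{0,-1}a_{0,1}=2a_{-1,1}a_{1,-1}; (2b) a_{1,0}=a_{1,-1}=0, a_{0,1}a_{-1,-1}=2a_{0,-1}a_{-1,1}, a_{0,1}²=4a_{1,1}a_{-1,1}, a_{0,1}a_{0,-1}=2a_{-1,-1}a_{1,1}; (3a) a_{-1,0}=a_{-1,-1}=0, a_{0,1}a_{1,-1}=2a_{0,-1}a_{1,1}, a_{0,1}²=4a_{-1,1}a_{1,1}, a_{0,1}a_{0,-1}=2a_{1,-1}a_{-1,1}; (3b) a_{-1,0}=a_{-1,1}=0, a_{0,-1}a_{1,1}=2a_{0,1}a_{1,-1}, a_{0,-1}²=4a_{-1,-1}a_{1,-1}, a_{0,-1}a_{0,1}=2a_{1,1}a_{-1,-1}. -/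
/- STATEMENT 6: Characterization of the interesting models whose group is D6:
(Φ∘Ψ)³ = id iff the multiplicities satisfy one of the six systems 1a,1b,2a,2b,3a,3b,
or one of these systems after the diagonal reflection a_{u,v} ↦ a_{v,u}. -/

noncomputable section

/-- Family 1a. -/
def Fam1a (b : ℤ → ℤ → ℂ) : Prop :=
  b 1 1 = 0 ∧ b (-1) (-1) = 0 ∧
  b (-1) 1 * b 1 (-1) = b (-1) 0 * b 1 0 ∧ b (-1) 0 * b 1 0 = b 0 1 * b 0 (-1)

/-- Family 1b. -/
def Fam1b (b : ℤ → ℤ → ℂ) : Prop :=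
  b 1 (-1) = 0 ∧ b (-1) 1 = 0 ∧
  b (-1) 0 * b 1 0 = b (-1) (-1) * b 1 1 ∧ b (-1) (-1) * b 1 1 = b 0 (-1) * b 0 1

/-- Family 2a. -/
def Fam2a (b : ℤ → ℤ → ℂ) : Prop :=
  b 1 0 = 0 ∧ b 1 1 = 0 ∧
  b 0 (-1) * b (-1) 1 = 2 * (b 0 1 * b (-1) (-1)) ∧
  b 0 (-1) ^ 2 = 4 * (b 1 (-1) * b (-1) (-1)) ∧
  b 0 (-1) * b 0 1 = 2 * (b (-1) 1 * b 1 (-1))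

/-- Family 2b. -/
def Fam2b (b : ℤ → ℤ → ℂ) : Prop :=
  b 1 0 = 0 ∧ b 1 (-1) = 0 ∧
  b 0 1 * b (-1) (-1) = 2 * (b 0 (-1) * b (-1) 1) ∧
  b 0 1 ^ 2 = 4 * (b 1 1 * b (-1) 1) ∧
  b 0 1 * b 0 (-1) = 2 * (b (-1) (-1) * b 1 1)

/-- Family 3a. -/
def Fam3a (b : ℤ → ℤ → ℂ) : Prop :=
  b (-1) 0 = 0 ∧ b (-1) (-1) = 0 ∧
  b 0 1 * b 1 (-1) = 2 * (b 0 (-1) * b 1 1) ∧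
  b 0 1 ^ 2 = 4 * (b (-1) 1 * b 1 1) ∧
  b 0 1 * b 0 (-1) = 2 * (b 1 (-1) * b (-1) 1)

/-- Family 3b. -/
def Fam3b (b : ℤ → ℤ → ℂ) : Prop :=
  b (-1) 0 = 0 ∧ b (-1) 1 = 0 ∧
  b 0 (-1) * b 1 1 = 2 * (b 0 1 * b 1 (-1)) ∧
  b 0 (-1) ^ 2 = 4 * (b (-1) (-1) * b 1 (-1)) ∧
  b 0 (-1) * b 0 1 = 2 * (b 1 1 * b (-1) (-1))

/-!
Clearing denominators in `S(x, y) = ∑ a_{u,v} x^u y^v` gives a biquadratic form, that is a `3 × 3`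
matrix `m` with centre `-S(x, y)`, which vanishes at `(x, y)`. Both maps fix `S(x, y)`, so `Φ`
exchanges the two roots in the first variable and `Ψ` those in the second. Since `Φ` and `Ψ` are
involutions, `(ΦΨ)³ = 1` is the braid relation `ΦΨΦ = ΨΦΨ`, which says that six alternating root
switches starting from `(x, y)` close up. By a criterion of Fayolle, Iasnogorodski and Malyshev this
happens iff a `4 × 4` determinant formed from the cofactors of `m` vanishes; as this determinant is
covariant under `GL₂ × GL₂`, it can be computed after moving `x` and `y` to `0` and `Φ x` to `∞`.
Finally `S(x, y)` is transcendental over `ℂ`, so the determinant must vanish for every constant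
centre, and its coefficients in the centre, taken up to the symmetries of the square, leave exactly
the listed families.
-/

section

open Matrix

/-! ### The closing determinant -/

section ClosingDet

open scoped Kronecker

variable {R S : Type*} [CommRing R] [CommRing S]

/-- The symmetric square of a `2 × 2` matrix, in the basis `e₀²`, `e₀e₁`, `e₁²`; its transpose acts
on the coefficients of binary quadratic forms. -/
def symSquare (g : Matrix (Fin 2) (Fin 2) R) : Matrix (Fin 3) (Fin 3) R :=
  !![g 0 0 ^ 2, 2 * g 0 0 * g 0 1, g 0 1 ^ 2;
     g 0 0 * g 1 0, g 0 0 * g 1 1 + g 0 1 * g 1 0, g 0 1 * g 1 1;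
     g 1 0 ^ 2, 2 * g 1 0 * g 1 1, g 1 1 ^ 2]

lemma adjugate_symSquare (g : Matrix (Fin 2) (Fin 2) R) :
    (symSquare g).adjugate = g.det • symSquare g.adjugate := by
  ext i j
  fin_cases i <;> fin_cases j <;>
    simp [symSquare, adjugate_fin_three, adjugate_fin_two, det_fin_two] <;> ring

/-- The catalecticant of a `3 × 3` array `Δ`: the doubly Hankel matrix with entry
`Δ (i + k) (j + l)` in row `(i, j)` and column `(k, l)`. -/
def catalecticant (Δ : Matrix (Fin 3) (Fin 3) R) : Matrix (Fin 2 × Fin 2) (Fin 2 × Fin 2) R :=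
  of fun p q => Δ ⟨p.1 + q.1, by omega⟩ ⟨p.2 + q.2, by omega⟩

lemma catalecticant_smul (c : R) (Δ : Matrix (Fin 3) (Fin 3) R) :
    catalecticant (c • Δ) = c • catalecticant Δ := rfl

lemma catalecticant_map (f : R →+* S) (Δ : Matrix (Fin 3) (Fin 3) R) :
    catalecticant (Δ.map f) = (catalecticant Δ).map f := rfl

lemma catalecticant_transpose {R : Type*} (Δ : Matrix (Fin 3) (Fin 3) R) :
    catalecticant Δᵀ = (catalecticant Δ).submatrix Prod.swap Prod.swap := rfl

lemma catalecticant_congr_symSquare (g h : Matrix (Fin 2) (Fin 2) R)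
    (Δ : Matrix (Fin 3) (Fin 3) R) :
    catalecticant (symSquare g * Δ * (symSquare h)ᵀ) =
      (g ⊗ₖ h) * catalecticant Δ * (g ⊗ₖ h)ᵀ := by
  ext ⟨i, j⟩ ⟨k, l⟩
  simp only [catalecticant, of_apply, mul_apply, transpose_apply, kronecker_apply,
    Fin.sum_univ_three, Fintype.sum_prod_type, Fin.sum_univ_two]
  fin_cases i <;> fin_cases j <;> fin_cases k <;> fin_cases l <;> simp [symSquare] <;> ring

lemma det_catalecticant (Δ : Matrix (Fin 3) (Fin 3) R) :
    (catalecticant Δ).det =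
      Δ 0 0 * Δ 2 0 * Δ 0 2 * Δ 2 2
      - (Δ 1 0 ^ 2 * Δ 0 2 * Δ 2 2 + Δ 0 1 ^ 2 * Δ 2 0 * Δ 2 2 + Δ 2 1 ^ 2 * Δ 0 0 * Δ 0 2
        + Δ 1 2 ^ 2 * Δ 0 0 * Δ 2 0 + Δ 1 1 ^ 2 * (Δ 0 0 * Δ 2 2 + Δ 2 0 * Δ 0 2))
      + 2 * Δ 1 1 * (Δ 1 0 * Δ 0 1 * Δ 2 2 + Δ 1 0 * Δ 2 1 * Δ 0 2 + Δ 0 1 * Δ 1 2 * Δ 2 0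
        + Δ 2 1 * Δ 1 2 * Δ 0 0)
      + Δ 1 0 ^ 2 * Δ 1 2 ^ 2 + Δ 0 1 ^ 2 * Δ 2 1 ^ 2 + Δ 1 1 ^ 4
      - 2 * (Δ 1 0 * Δ 0 1 * Δ 2 1 * Δ 1 2 + Δ 1 0 * Δ 1 2 * Δ 1 1 ^ 2
        + Δ 0 1 * Δ 2 1 * Δ 1 1 ^ 2) := by
  have h : (catalecticant Δ).submatrix finProdFinEquiv.symm finProdFinEquiv.symm =
      !![Δ 0 0, Δ 0 1, Δ 1 0, Δ 1 1; Δ 0 1, Δ 0 2, Δ 1 1, Δ 1 2;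
         Δ 1 0, Δ 1 1, Δ 2 0, Δ 2 1; Δ 1 1, Δ 1 2, Δ 2 1, Δ 2 2] := by
    ext i j
    fin_cases i <;> fin_cases j <;> rfl
  rw [← det_submatrix_equiv_self finProdFinEquiv.symm, h]
  simp [det_succ_row_zero, Fin.sum_univ_succ, Fin.succAbove]
  ring

/-- The closing determinant of the biquadratic form `∑ m i j xⁱ yʲ`: it vanishes iff alternating
switches of the roots in `x` and in `y` close up after six steps, see `closingDet_eq_zero_iff`. -/
def closingDet (m : Matrix (Fin 3) (Fin 3) R) : R :=
  (catalecticant m.adjugate).det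

lemma closingDet_map (f : R →+* S) (m : Matrix (Fin 3) (Fin 3) R) :
    closingDet (m.map f) = f (closingDet m) := by
  rw [closingDet, closingDet, RingHom.map_det, RingHom.mapMatrix_apply, ← catalecticant_map]
  congr 2
  exact (RingHom.map_adjugate f m).symm

lemma closingDet_transpose (m : Matrix (Fin 3) (Fin 3) R) : closingDet mᵀ = closingDet m := by
  rw [closingDet, ← adjugate_transpose, catalecticant_transpose]
  exact det_submatrix_equiv_self (Equiv.prodComm _ _) _

lemma closingDet_symSquare (g h : Matrix (Fin 2) (Fin 2) R) (m : Matrix (Fin 3) (Fin 3) R) :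
    closingDet ((symSquare g)ᵀ * m * symSquare h) = (g.det * h.det) ^ 8 * closingDet m := by
  have hadj : ((symSquare g)ᵀ * m * symSquare h).adjugate =
      (g.det * h.det) • (symSquare h.adjugate * m.adjugate * (symSquare g.adjugate)ᵀ) := by
    rw [adjugate_mul_distrib, adjugate_mul_distrib, ← adjugate_transpose, adjugate_symSquare,
      adjugate_symSquare]
    simp only [transpose_smul, Matrix.smul_mul, Matrix.mul_smul, smul_smul, Matrix.mul_assoc]
  have hdet (k : Matrix (Fin 2) (Fin 2) R) : k.adjugate.det = k.det := by simp [det_adjugate]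
  rw [closingDet, hadj, catalecticant_smul, catalecticant_congr_symSquare, det_smul, det_mul,
    det_mul, det_transpose, det_kronecker, hdet, hdet, closingDet]
  simp only [Fintype.card_prod, Fintype.card_fin]
  ring

lemma closingDet_eq_of_col_zero (m : Matrix (Fin 3) (Fin 3) R) (h₀ : m 0 0 = 0) (h₂ : m 2 0 = 0) :
    closingDet m = m 1 0 ^ 2 *
      ((m 1 0 * m 0 2 ^ 2 - m 1 1 * m 0 1 * m 0 2 + m 1 2 * m 0 1 ^ 2) *
          (m 1 0 * m 2 2 ^ 2 - m 1 1 * m 2 1 * m 2 2 + m 1 2 * m 2 1 ^ 2) +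
        m 0 1 * m 2 1 * (m 0 1 * m 2 2 - m 0 2 * m 2 1) ^ 2) := by
  simp only [closingDet, det_catalecticant, adjugate_fin_three, of_apply, cons_val, h₀, h₂]
  ring

end ClosingDet

/-! ### Biquadratic forms with prescribed roots -/

section Roots

variable {R S : Type*} [CommRing R] [CommRing S]

/-- The Veronese vector of `t`, so that `veronese x ⬝ᵥ m *ᵥ veronese y` is the value at `(x, y)` of
the biquadratic form with coefficient matrix `m`. -/
def veronese (t : R) : Fin 3 → R := ![1, t, t ^ 2]

/-- The coefficients of the monic quadratic with roots `u` and `v`, constant term first. -/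
def quadRoots (u v : R) : Fin 3 → R := ![u * v, -(u + v), 1]

lemma veronese_dotProduct_quadRoots (t u v : R) :
    veronese t ⬝ᵥ quadRoots u v = (t - u) * (t - v) := by
  simp only [veronese, quadRoots, dotProduct, Fin.sum_univ_three, cons_val]
  ring

lemma mulVec_veronese_eq_iff {m : Matrix (Fin 3) (Fin 3) R} {t d u v : R} :
    m *ᵥ veronese t = d • quadRoots u v ↔
      m 0 0 + m 0 1 * t + m 0 2 * t ^ 2 = d * (u * v) ∧
      m 1 0 + m 1 1 * t + m 1 2 * t ^ 2 = -d * (u + v) ∧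
      m 2 0 + m 2 1 * t + m 2 2 * t ^ 2 = d := by
  simp [funext_iff, Fin.forall_fin_succ, mulVec, dotProduct, Fin.sum_univ_three, veronese,
    quadRoots, ← mul_neg]

lemma mulVec_veronese_map {m : Matrix (Fin 3) (Fin 3) R} {t d u v : R} (f : R →+* R)
    (hm : m.map f = m) (h : m *ᵥ veronese t = d • quadRoots u v) :
    m *ᵥ veronese (f t) = f d • quadRoots (f u) (f v) := by
  have hm' (i j : Fin 3) : f (m i j) = m i j := congrFun₂ hm i j
  rw [mulVec_veronese_eq_iff] at h ⊢
  obtain ⟨h₀, h₁, h₂⟩ := h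
  refine ⟨?_, ?_, ?_⟩
  · simpa [hm'] using congrArg f h₀
  · simpa [hm'] using congrArg f h₁
  · simpa [hm'] using congrArg f h₂

lemma mul_sub_mul_sub_eq_of_mulVec_veronese {m : Matrix (Fin 3) (Fin 3) R}
    {x y c d u v u' v' : R} (hy : m *ᵥ veronese y = d • quadRoots u v)
    (hx : mᵀ *ᵥ veronese x = c • quadRoots u' v') :
    d * ((x - u) * (x - v)) = c * ((y - u') * (y - v')) := by
  calc d * ((x - u) * (x - v)) = veronese x ⬝ᵥ m *ᵥ veronese y := by
        rw [hy, dotProduct_smul, veronese_dotProduct_quadRoots, smul_eq_mul]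
    _ = veronese y ⬝ᵥ mᵀ *ᵥ veronese x := by
        rw [mulVec_transpose, dotProduct_mulVec, dotProduct_comm]
    _ = c * ((y - u') * (y - v')) := by
        rw [hx, dotProduct_smul, veronese_dotProduct_quadRoots, smul_eq_mul]

/-- Twice the polarization of `veronese`, so that pairing with it evaluates a quadratic form at the
pair `(s, t)`. -/
def polarVeronese (s t : R) : Fin 3 → R := ![2, s + t, 2 * s * t]

lemma polarVeronese_comm (s t : R) : polarVeronese s t = polarVeronese t s := by
  rw [polarVeronese, polarVeronese, mul_right_comm, add_comm]

lemma polarVeronese_dotProduct_quadRoots (s t u v : R) :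
    polarVeronese s t ⬝ᵥ quadRoots u v = (s - u) * (t - v) + (s - v) * (t - u) := by
  simp only [polarVeronese, quadRoots, dotProduct, Fin.sum_univ_three, cons_val]
  ring

lemma polarVeronese_dotProduct_mulVec {m : Matrix (Fin 3) (Fin 3) R} {x v y d : R} (x' : R)
    (hy : m *ᵥ veronese y = d • quadRoots x v) :
    polarVeronese x x' ⬝ᵥ m *ᵥ veronese y = d * ((x - v) * (x' - x)) := by
  rw [hy, dotProduct_smul, polarVeronese_dotProduct_quadRoots, smul_eq_mul, sub_self, zero_mul,
    zero_add]

lemma pow_eight_mul_closingDet {m : Matrix (Fin 3) (Fin 3) R} {x x' y y₁ y₂ c c' d : R}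
    (hy : m *ᵥ veronese y = d • quadRoots x x')
    (hx : mᵀ *ᵥ veronese x = c • quadRoots y y₁)
    (hx' : mᵀ *ᵥ veronese x' = c' • quadRoots y y₂) :
    (x' - x) ^ 8 * closingDet m = d ^ 2 * (x - x') ^ 4 * (c * c') ^ 2 *
      ((polarVeronese x x' ⬝ᵥ m *ᵥ veronese y₁) * (polarVeronese x x' ⬝ᵥ m *ᵥ veronese y₂) -
        c * ((y₂ - y) * (y₂ - y₁)) * (c' * ((y₁ - y) * (y₁ - y₂)))) := by
  obtain ⟨hx₀, hx₁, hx₂⟩ := mulVec_veronese_eq_iff.1 hx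
  obtain ⟨hx'₀, hx'₁, hx'₂⟩ := mulVec_veronese_eq_iff.1 hx'
  -- In the coordinates of `n`, the points `x` and `x'` lie at `0` and `∞`, and `y` lies at `0`.
  obtain ⟨n, hn⟩ : ∃ n, n = (symSquare !![1, 1; x, x'])ᵀ * m * symSquare !![1, 0; y, 1] := ⟨_, rfl⟩
  have hdet : closingDet n = (x' - x) ^ 8 * closingDet m := by
    simp [hn, closingDet_symSquare]
  have hn_apply (i j : Fin 3) := congrFun₂ hn i j
  simp only [mul_apply, Fin.sum_univ_three, transpose_apply, symSquare, of_apply]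
    at hn_apply hx₀ hx₁ hx₂ hx'₀ hx'₁ hx'₂
  obtain ⟨n₀₀, n₀₁, n₀₂⟩ : n 0 0 = 0 ∧ n 0 1 = c * (y - y₁) ∧ n 0 2 = c := by
    simp only [hn_apply, cons_val]
    exact ⟨by linear_combination hx₀ + y * hx₁ + y ^ 2 * hx₂,
      by linear_combination hx₁ + 2 * y * hx₂, by linear_combination hx₂⟩
  obtain ⟨n₂₀, n₂₁, n₂₂⟩ : n 2 0 = 0 ∧ n 2 1 = c' * (y - y₂) ∧ n 2 2 = c' := by
    simp only [hn_apply, cons_val]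
    exact ⟨by linear_combination hx'₀ + y * hx'₁ + y ^ 2 * hx'₂,
      by linear_combination hx'₁ + 2 * y * hx'₂, by linear_combination hx'₂⟩
  have hpolar (t : R) : polarVeronese x x' ⬝ᵥ m *ᵥ veronese t =
      n 1 0 - n 1 1 * (y - t) + n 1 2 * (y - t) ^ 2 := by
    simp only [mulVec, dotProduct, polarVeronese, veronese, Fin.sum_univ_three, hn_apply, cons_val]
    ring
  have n₁₀ : n 1 0 = -d * (x - x') ^ 2 := by
    linear_combination polarVeronese_dotProduct_mulVec x' hy - hpolar y
  rw [← hdet, closingDet_eq_of_col_zero n n₀₀ n₂₀, n₀₁, n₀₂, n₂₁, n₂₂, hpolar, hpolar, n₁₀]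
  ring

theorem closingDet_mul_sub [IsDomain R] {m : Matrix (Fin 3) (Fin 3) R}
    {x x' x₃ x₃' y y₁ y₂ c c' d d₁ d₂ : R} (hne : x ≠ x')
    (hy : m *ᵥ veronese y = d • quadRoots x x')
    (hy₁ : m *ᵥ veronese y₁ = d₁ • quadRoots x x₃)
    (hy₂ : m *ᵥ veronese y₂ = d₂ • quadRoots x' x₃')
    (hx : mᵀ *ᵥ veronese x = c • quadRoots y y₁)
    (hx' : mᵀ *ᵥ veronese x' = c' • quadRoots y y₂) :
    closingDet m * (x - x') = (d * c * c') ^ 2 * d₁ * d₂ * (x₃' - x₃) := by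
  have h := pow_eight_mul_closingDet hy hx hx'
  rw [← mul_sub_mul_sub_eq_of_mulVec_veronese hy₁ hx',
    ← mul_sub_mul_sub_eq_of_mulVec_veronese hy₂ hx, polarVeronese_dotProduct_mulVec x' hy₁,
    polarVeronese_comm, polarVeronese_dotProduct_mulVec x hy₂] at h
  refine mul_left_cancel₀ (pow_ne_zero 7 (sub_ne_zero.2 hne)) ?_
  linear_combination h

lemma eq_zero_of_forall_dotProduct_veronese [IsDomain R] [Infinite R] {v : Fin 3 → R}
    (h : ∀ t, v ⬝ᵥ veronese t = 0) : v = 0 := by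
  have hinj : Function.Injective fun i : Fin 3 => Infinite.natEmbedding R i :=
    (Infinite.natEmbedding R).injective.comp Fin.val_injective
  refine eq_zero_of_forall_index_sum_mul_pow_eq_zero hinj fun j => ?_
  simpa [dotProduct, Fin.sum_univ_three, veronese] using h (Infinite.natEmbedding R j)

lemma eq_zero_of_forall_veronese_dotProduct_mulVec [IsDomain R] [Infinite R]
    {M : Matrix (Fin 3) (Fin 3) R} (h : ∀ s t, veronese s ⬝ᵥ M *ᵥ veronese t = 0) : M = 0 := by
  have hcol (t : R) : M *ᵥ veronese t = 0 :=
    eq_zero_of_forall_dotProduct_veronese fun s => by rw [dotProduct_comm, h]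
  exact funext fun i => eq_zero_of_forall_dotProduct_veronese fun t => congrFun (hcol t) i

lemma map_veronese (f : R →+* S) (t : R) : f ∘ veronese t = veronese (f t) := by
  ext i
  fin_cases i <;> simp [veronese]

lemma map_veronese_dotProduct_mulVec (f : R →+* S) (M : Matrix (Fin 3) (Fin 3) R) (s t : R) :
    f (veronese s ⬝ᵥ M *ᵥ veronese t) = veronese (f s) ⬝ᵥ M.map f *ᵥ veronese (f t) := by
  rw [RingHom.map_dotProduct, map_veronese, ← map_veronese f t]
  congr 1
  ext i
  exact RingHom.map_mulVec f M _ i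

end Roots

/-! ### Root switches and the braid relation -/

/-- `σ` is the root switch in the first variable of the biquadratic form `m` along `(x, y)`: it
fixes the coefficients and `y`, and `x` and `σ x` are the two distinct roots of `m` over `y`. -/
structure IsRootSwitch {L : Type*} [Field L] (m : Matrix (Fin 3) (Fin 3) L) (σ : L →+* L)
    (x y : L) : Prop where
  map_eq : m.map σ = m
  map_right : σ y = y
  map_left_ne : σ x ≠ x
  exists_mulVec_eq : ∃ d : L, d ≠ 0 ∧ m *ᵥ veronese y = d • quadRoots x (σ x)

section RootSwitch

variable {L : Type*} [Field L] {m : Matrix (Fin 3) (Fin 3) L} {Φ Ψ : L →+* L} {x y : L}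

lemma IsRootSwitch.map_map_left (h : IsRootSwitch m Φ x y) : Φ (Φ x) = x := by
  obtain ⟨d, hd, hy⟩ := h.exists_mulVec_eq
  have hy' := mulVec_veronese_map Φ h.map_eq hy
  rw [h.map_right] at hy'
  obtain ⟨-, hsum, hlead⟩ := mulVec_veronese_eq_iff.1 hy
  obtain ⟨-, hsum', hlead'⟩ := mulVec_veronese_eq_iff.1 hy'
  have hd' : Φ d = d := hlead'.symm.trans hlead
  rw [hd', hsum] at hsum'
  exact mul_left_cancel₀ hd (by linear_combination hsum')

theorem closingDet_eq_zero_iff (hΦ : IsRootSwitch m Φ x y) (hΨ : IsRootSwitch mᵀ Ψ y x) :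
    closingDet m = 0 ↔ Φ (Ψ (Φ x)) = Ψ (Φ x) := by
  obtain ⟨d, hd, hy⟩ := hΦ.exists_mulVec_eq
  obtain ⟨c, hc, hx⟩ := hΨ.exists_mulVec_eq
  have hy₁ := mulVec_veronese_map Ψ (by simpa [transpose_map] using hΨ.map_eq) hy
  rw [hΨ.map_right] at hy₁
  have hy₂ := mulVec_veronese_map Φ hΦ.map_eq hy₁
  have hx' := mulVec_veronese_map Φ (by rw [transpose_map, hΦ.map_eq]) hx
  rw [hΦ.map_right] at hx'
  have hclose := closingDet_mul_sub hΦ.map_left_ne.symm hy hy₁ hy₂ hx hx'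
  have hne : x - Φ x ≠ 0 := sub_ne_zero.2 hΦ.map_left_ne.symm
  rw [← mul_eq_zero_iff_right hne, hclose]
  simp [hd, hc, sub_eq_zero]

end RootSwitch

section Involutions

variable {M : Type*} [Monoid M]

lemma mul_eq_one_iff_eq_of_mul_self {s t : M} (hs : s * s = 1) : s * t = 1 ↔ s = t := by
  refine ⟨fun h => ?_, fun h => h ▸ hs⟩
  rw [← mul_one s, ← h, ← mul_assoc, hs, one_mul]

lemma mul_pow_three_eq_one_iff {f g : M} (hf : f * f = 1) (hg : g * g = 1) :
    f * g * (f * g * (f * g)) = 1 ↔ f * g * f = g * f * g := by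
  have hs : f * g * f * (f * g * f) = 1 := by
    rw [mul_assoc (f * g), ← mul_assoc f (f * g), ← mul_assoc f f, hf, one_mul, mul_assoc f g,
      ← mul_assoc g g, hg, one_mul, hf]
  rw [← mul_eq_one_iff_eq_of_mul_self hs]
  simp only [mul_assoc]

end Involutions

lemma rf_algHom_ext {A : Type*} [Semiring A] [Algebra ℂ A] {f g : RF →ₐ[ℂ] A}
    (hx : f Xr = g Xr) (hy : f Yr = g Yr) : f = g := by
  refine IsLocalization.algHom_ext (nonZeroDivisors (MvPolynomial (Fin 2) ℂ)) ?_
  refine MvPolynomial.algHom_ext fun i => ?_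
  fin_cases i
  · exact hx
  · exact hy

theorem comp_pow_three_eq_id_iff_closingDet_eq_zero {m : Matrix (Fin 3) (Fin 3) RF}
    {Φ Ψ : RF →ₐ[ℂ] RF} (hΦ : IsRootSwitch m (Φ : RF →+* RF) Xr Yr)
    (hΨ : IsRootSwitch mᵀ (Ψ : RF →+* RF) Yr Xr) :
    (Φ.comp Ψ).comp ((Φ.comp Ψ).comp (Φ.comp Ψ)) = AlgHom.id ℂ RF ↔ closingDet m = 0 := by
  have hΦ' : IsRootSwitch mᵀᵀ (Φ : RF →+* RF) Xr Yr := by rwa [transpose_transpose]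
  have hΦy : Φ Yr = Yr := hΦ.map_right
  have hΨx : Ψ Xr = Xr := hΨ.map_right
  have hΦΦ : Φ * Φ = 1 := rf_algHom_ext hΦ.map_map_left (by simp [AlgHom.mul_apply, hΦy])
  have hΨΨ : Ψ * Ψ = 1 := rf_algHom_ext (by simp [AlgHom.mul_apply, hΨx]) hΨ.map_map_left
  have hbraid : (Φ.comp Ψ).comp ((Φ.comp Ψ).comp (Φ.comp Ψ)) = AlgHom.id ℂ RF ↔
      Φ * Ψ * Φ = Ψ * Φ * Ψ := mul_pow_three_eq_one_iff hΦΦ hΨΨ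
  have hx : closingDet m = 0 ↔ (Φ * Ψ * Φ) Xr = (Ψ * Φ * Ψ) Xr := by
    simpa [AlgHom.mul_apply, hΨx] using closingDet_eq_zero_iff hΦ hΨ
  have hy : closingDet m = 0 ↔ (Φ * Ψ * Φ) Yr = (Ψ * Φ * Ψ) Yr := by
    simpa [AlgHom.mul_apply, hΦy, closingDet_transpose, eq_comm] using
      closingDet_eq_zero_iff hΨ hΦ'
  rw [hbraid]
  exact ⟨fun h => hx.2 (by rw [h]), fun h => rf_algHom_ext (hx.1 h) (hy.1 h)⟩

/-! ### The kernel of a model -/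

section Reflections

variable {R : Type*}

/-- The reflection of a model in the diagonal. -/
def transp (a : ℤ → ℤ → R) : ℤ → ℤ → R := fun u v => a v u

/-- The reflection of a model in the vertical axis. -/
def flipX (a : ℤ → ℤ → R) : ℤ → ℤ → R := fun u v => a (-u) v

/-- The reflection of a model in the horizontal axis. -/
def flipY (a : ℤ → ℤ → R) : ℤ → ℤ → R := fun u v => a u (-v)

lemma flipX_flipX (a : ℤ → ℤ → R) : flipX (flipX a) = a := by
  funext u v
  simp [flipX]

lemma flipY_flipY (a : ℤ → ℤ → R) : flipY (flipY a) = a := by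
  funext u v
  simp [flipY]

lemma flipY_flipX (a : ℤ → ℤ → R) : flipY (flipX a) = flipX (flipY a) := rfl

variable {a : ℤ → ℤ → ℂ}

lemma Interesting.transp (h : Interesting a) : Interesting (transp a) :=
  ⟨h.2.1, h.1, h.2.2.2, h.2.2.1⟩

lemma Interesting.flipX (h : Interesting a) : Interesting (flipX a) := by
  obtain ⟨hE, hN, hW, hS⟩ := h
  exact ⟨hW, fun ⟨h₁, h₂, h₃⟩ => hN ⟨h₃, h₂, h₁⟩, hE, fun ⟨h₁, h₂, h₃⟩ => hS ⟨h₃, h₂, h₁⟩⟩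

lemma Interesting.flipY (h : Interesting a) : Interesting (flipY a) :=
  h.transp.flipX.transp

end Reflections

section KernelMatrix

/-- The matrix of the model `A` with central entry `c`: row `i` and column `j` hold the multiplicity
of the step `(i - 1, j - 1)`, that is the coefficient of `x^i y^j` after multiplication by `xy`. -/
def kernelMatrix {R : Type*} (A : ℤ → ℤ → R) (c : R) : Matrix (Fin 3) (Fin 3) R :=
  !![A (-1) (-1), A (-1) 0, A (-1) 1; A 0 (-1), c, A 0 1; A 1 (-1), A 1 0, A 1 1]

lemma kernelMatrix_transpose {R : Type*} (A : ℤ → ℤ → R) (c : R) :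
    (kernelMatrix A c)ᵀ = kernelMatrix (transp A) c := by
  ext i j
  fin_cases i <;> fin_cases j <;> rfl

variable {R S : Type*} [CommRing R] [CommRing S]

lemma kernelMatrix_map (f : R →+* S) (A : ℤ → ℤ → R) (c : R) :
    (kernelMatrix A c).map f = kernelMatrix (fun u v => f (A u v)) (f c) := by
  ext i j
  fin_cases i <;> fin_cases j <;> rfl

lemma closingDet_kernelMatrix_transp (A : ℤ → ℤ → R) (c : R) :
    closingDet (kernelMatrix (transp A) c) = closingDet (kernelMatrix A c) := by
  rw [← kernelMatrix_transpose, closingDet_transpose]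

lemma closingDet_kernelMatrix_flipX (A : ℤ → ℤ → R) (c : R) :
    closingDet (kernelMatrix (flipX A) c) = closingDet (kernelMatrix A c) := by
  have hflip : kernelMatrix (flipX A) c =
      (symSquare !![0, 1; 1, 0])ᵀ * kernelMatrix A c * symSquare 1 := by
    ext i j
    fin_cases i <;> fin_cases j <;>
      simp [kernelMatrix, flipX, symSquare, mul_apply, Fin.sum_univ_three]
  rw [hflip, closingDet_symSquare, det_fin_two_of, det_one]
  ring

lemma closingDet_kernelMatrix_flipY (A : ℤ → ℤ → R) (c : R) :
    closingDet (kernelMatrix (flipY A) c) = closingDet (kernelMatrix A c) := by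
  rw [← closingDet_kernelMatrix_transp, ← closingDet_kernelMatrix_transp A,
    ← closingDet_kernelMatrix_flipX (transp A)]
  rfl

lemma closingDet_kernelMatrix_eq_zero_iff [IsDomain R] [Infinite R] [Algebra R S] {z : S}
    (hz : Transcendental R z) (a : ℤ → ℤ → R) :
    closingDet (kernelMatrix (fun u v => algebraMap R S (a u v)) z) = 0 ↔
      ∀ c, closingDet (kernelMatrix a c) = 0 := by
  let P : Polynomial R := closingDet (kernelMatrix (fun u v => Polynomial.C (a u v)) Polynomial.X)
  have hz_eval : closingDet (kernelMatrix (fun u v => algebraMap R S (a u v)) z) =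
      Polynomial.aeval z P := by
    rw [← AlgHom.coe_toRingHom, ← closingDet_map, kernelMatrix_map]
    simp
  have hc_eval (c : R) : closingDet (kernelMatrix a c) = P.eval c := by
    rw [← Polynomial.coe_evalRingHom, ← closingDet_map, kernelMatrix_map]
    simp
  simp only [hz_eval, hc_eval]
  refine ⟨fun h c => ?_, fun h => ?_⟩
  · rw [transcendental_iff.1 hz P h, Polynomial.eval_zero]
  · have hP : P = 0 := Polynomial.funext fun c => by rw [h, Polynomial.eval_zero]
    rw [hP, map_zero]

end KernelMatrix

section StepSum

variable {L : Type*} [Field L]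

/-- The Laurent polynomial of one side of the step square, for the three multiplicities `p`. -/
def sideSum (p : ℤ → L) (t : L) : L := p (-1) * t⁻¹ + p 0 + p 1 * t

/-- The step polynomial `∑ A u v x^u y^v` of a model, over the eight nonzero steps. -/
def stepSum (A : ℤ → ℤ → L) (x y : L) : L :=
  x⁻¹ * sideSum (A (-1)) y + (A 0 (-1) * y⁻¹ + A 0 1 * y) + x * sideSum (A 1) y

variable {A : ℤ → ℤ → L} {x y : L}

lemma mul_sideSum {t : L} (ht : t ≠ 0) (p : ℤ → L) :
    t * sideSum p t = p (-1) + p 0 * t + p 1 * t ^ 2 := by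
  simp only [sideSum]
  field_simp

lemma stepSum_transp (A : ℤ → ℤ → L) (x y : L) : stepSum (transp A) y x = stepSum A x y := by
  simp only [stepSum, sideSum, transp]
  ring

lemma map_stepSum {F : Type*} [FunLike F L L] [RingHomClass F L L] (f : F)
    (hA : ∀ u v, f (A u v) = A u v) (x y : L) :
    f (stepSum A x y) = stepSum A (f x) (f y) := by
  simp [stepSum, sideSum, hA]

lemma stepSum_switch (hx : x ≠ 0) (hN : sideSum (A (-1)) y ≠ 0) (hD : sideSum (A 1) y ≠ 0) :
    stepSum A (x⁻¹ * (sideSum (A (-1)) y / sideSum (A 1) y)) y = stepSum A x y := by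
  simp only [stepSum]
  generalize sideSum (A (-1)) y = N at *
  generalize sideSum (A 1) y = D at *
  field_simp
  ring

lemma kernelMatrix_mulVec_veronese (hx : x ≠ 0) (hy : y ≠ 0) (hD : sideSum (A 1) y ≠ 0) :
    kernelMatrix A (-stepSum A x y) *ᵥ veronese y =
      (y * sideSum (A 1) y) • quadRoots x (x⁻¹ * (sideSum (A (-1)) y / sideSum (A 1) y)) := by
  rw [mulVec_veronese_eq_iff]
  simp only [kernelMatrix, of_apply, cons_val, ← mul_sideSum hy]
  refine ⟨by field_simp, ?_, trivial⟩
  simp only [stepSum]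
  generalize sideSum (A (-1)) y = N at *
  generalize sideSum (A 1) y = D at *
  field_simp
  ring

end StepSum

/-- No nonzero polynomial of degree at most two in each variable, with coefficients in `k`, vanishes
at `(x, y)`. -/
def BiquadraticallyIndependent (k : Type*) {K : Type*} [CommRing k] [CommRing K] [Algebra k K]
    (x y : K) : Prop :=
  ∀ M : Matrix (Fin 3) (Fin 3) k, veronese x ⬝ᵥ M.map (algebraMap k K) *ᵥ veronese y = 0 → M = 0

lemma biquadraticallyIndependent_Xr_Yr : BiquadraticallyIndependent ℂ Xr Yr := by
  intro M h
  have hM : M.map (algebraMap ℂ RF) =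
      (M.map MvPolynomial.C).map (algebraMap (MvPolynomial (Fin 2) ℂ) RF) := by
    rw [IsScalarTower.algebraMap_eq ℂ (MvPolynomial (Fin 2) ℂ) RF, MvPolynomial.algebraMap_eq,
      RingHom.coe_comp, Matrix.map_map]
  rw [hM, Xr, Yr, ← map_veronese_dotProduct_mulVec,
    map_eq_zero_iff _ (IsFractionRing.injective _ _)] at h
  refine eq_zero_of_forall_veronese_dotProduct_mulVec fun s t => ?_
  have heval : (M.map MvPolynomial.C).map (MvPolynomial.eval ![s, t]) = M := by
    ext
    simp
  simpa [map_veronese_dotProduct_mulVec, heval] using congrArg (MvPolynomial.eval ![s, t]) h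

namespace BiquadraticallyIndependent

section

variable {k K : Type*} [Field k] [Field K] [Algebra k K] {p : ℤ → k} {x y : K}

lemma symm (h : BiquadraticallyIndependent k x y) : BiquadraticallyIndependent k y x := by
  intro M hM
  refine transpose_eq_zero.1 (h Mᵀ ?_)
  rw [transpose_map, dotProduct_comm, mulVec_transpose, ← dotProduct_mulVec, hM]

lemma left_ne_zero (h : BiquadraticallyIndependent k x y) : x ≠ 0 := by
  rintro rfl
  have hM : !![0, 0, 0; 1, 0, 0; 0, 0, 0] = (0 : Matrix (Fin 3) (Fin 3) k) := h _ <| by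
    simp [dotProduct, mulVec, Fin.sum_univ_three, veronese]
  exact one_ne_zero (congrFun₂ hM 1 0)

lemma right_ne_zero (h : BiquadraticallyIndependent k x y) : y ≠ 0 :=
  h.symm.left_ne_zero

lemma sideSum_ne (h : BiquadraticallyIndependent k x y) (hp : ¬(p (-1) = 0 ∧ p 0 = 0 ∧ p 1 = 0))
    (q : ℤ → k) : sideSum (fun v => algebraMap k K (p v)) y ≠
      x ^ 2 * sideSum (fun v => algebraMap k K (q v)) y := by
  intro hpq
  have hM : !![p (-1), p 0, p 1; 0, 0, 0; -q (-1), -q 0, -q 1] = 0 := h _ <| by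
    have hp := mul_sideSum h.right_ne_zero fun v => algebraMap k K (p v)
    have hq := mul_sideSum h.right_ne_zero fun v => algebraMap k K (q v)
    simp only [dotProduct, mulVec, Fin.sum_univ_three, veronese, map_apply, of_apply, cons_val,
      map_neg, map_zero]
    linear_combination y * hpq - hp + x ^ 2 * hq
  exact hp ⟨congrFun₂ hM 0 0, congrFun₂ hM 0 1, congrFun₂ hM 0 2⟩

lemma sideSum_ne_zero (h : BiquadraticallyIndependent k x y)
    (hp : ¬(p (-1) = 0 ∧ p 0 = 0 ∧ p 1 = 0)) :
    sideSum (fun v => algebraMap k K (p v)) y ≠ 0 := by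
  simpa [sideSum] using h.sideSum_ne hp 0

end

variable {K : Type*} [Field K] [Algebra ℂ K] {a : ℤ → ℤ → ℂ} {x y : K}

lemma stepSum_ne_algebraMap (h : BiquadraticallyIndependent ℂ x y) (hI : Interesting a) (c : ℂ) :
    stepSum (fun u v => algebraMap ℂ K (a u v)) x y ≠ algebraMap ℂ K c := by
  intro hc
  have hM : kernelMatrix a (-c) = 0 := h _ <| by
    rw [kernelMatrix_map, map_neg, ← hc, kernelMatrix_mulVec_veronese h.left_ne_zero h.right_ne_zero
      (h.sideSum_ne_zero hI.1), dotProduct_smul, veronese_dotProduct_quadRoots, sub_self, zero_mul,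
      smul_zero]
  exact hI.1 ⟨congrFun₂ hM 2 0, congrFun₂ hM 2 1, congrFun₂ hM 2 2⟩

lemma transcendental_neg_stepSum (h : BiquadraticallyIndependent ℂ x y) (hI : Interesting a) :
    Transcendental ℂ (-stepSum (fun u v => algebraMap ℂ K (a u v)) x y) := by
  intro halg
  obtain ⟨c, hc⟩ := halg.isIntegral.mem_range_algebraMap_of_minpoly_splits
    (IsAlgClosed.splits (k := ℂ) _)
  exact h.stepSum_ne_algebraMap hI (-c) (by rw [map_neg, hc, neg_neg])

lemma isRootSwitch (h : BiquadraticallyIndependent ℂ x y) (hI : Interesting a) {Φ : K →ₐ[ℂ] K}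
    (hΦx : Φ x = x⁻¹ * (sideSum (fun v => algebraMap ℂ K (a (-1) v)) y /
      sideSum (fun v => algebraMap ℂ K (a 1 v)) y)) (hΦy : Φ y = y) :
    IsRootSwitch (kernelMatrix (fun u v => algebraMap ℂ K (a u v))
      (-stepSum (fun u v => algebraMap ℂ K (a u v)) x y)) (Φ : K →+* K) x y := by
  have hD := h.sideSum_ne_zero hI.1
  have hN := h.sideSum_ne_zero hI.2.2.1
  have hx := h.left_ne_zero
  have hfix : Φ (stepSum (fun u v => algebraMap ℂ K (a u v)) x y) =
      stepSum (fun u v => algebraMap ℂ K (a u v)) x y := by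
    rw [map_stepSum Φ fun u v => Φ.commutes _, hΦx, hΦy]
    exact stepSum_switch hx hN hD
  refine ⟨?_, hΦy, fun hfix_x => ?_, ?_⟩
  · rw [kernelMatrix_map]
    simp [hfix]
  · rw [AlgHom.coe_toRingHom, hΦx] at hfix_x
    refine h.sideSum_ne hI.2.2.1 (a 1) ?_
    field_simp at hfix_x
    exact hfix_x
  · refine ⟨_, mul_ne_zero h.right_ne_zero hD, ?_⟩
    rw [kernelMatrix_mulVec_veronese hx h.right_ne_zero hD, AlgHom.coe_toRingHom, hΦx]

lemma isRootSwitch_transpose (h : BiquadraticallyIndependent ℂ x y) (hI : Interesting a)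
    {Ψ : K →ₐ[ℂ] K} (hΨx : Ψ x = x)
    (hΨy : Ψ y = y⁻¹ * (sideSum (fun u => algebraMap ℂ K (a u (-1))) x /
      sideSum (fun u => algebraMap ℂ K (a u 1)) x)) :
    IsRootSwitch (kernelMatrix (fun u v => algebraMap ℂ K (a u v))
      (-stepSum (fun u v => algebraMap ℂ K (a u v)) x y))ᵀ (Ψ : K →+* K) y x := by
  rw [kernelMatrix_transpose, ← stepSum_transp]
  exact h.symm.isRootSwitch hI.transp hΨy hΨx

end BiquadraticallyIndependent

/-! ### Classification of the models with vanishing closing determinant -/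

section Coefficients

variable {R : Type*} [CommRing R]

lemma closingDet_kernelMatrix_of_northEast_east (a : ℤ → ℤ → R) (c : R) (hne : a 1 1 = 0)
    (he : a 1 0 = 0) :
    closingDet (kernelMatrix a c) = a 1 (-1) ^ 2 *
      ((a 0 1 * a (-1) 1 * a 0 (-1) - a 0 1 ^ 2 * a (-1) (-1) - a (-1) 1 ^ 2 * a 1 (-1)) ^ 2 -
        (a (-1) 0 * a 0 1 - c * a (-1) 1) *
          (c * (a 0 1 ^ 2 * a (-1) (-1) - a (-1) 1 ^ 2 * a 1 (-1)) +
            a (-1) 0 * a 0 1 * (2 * (a (-1) 1 * a 1 (-1)) - a 0 1 * a 0 (-1)))) := by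
  simp only [closingDet, det_catalecticant, adjugate_fin_three, kernelMatrix, of_apply, cons_val,
    hne, he]
  ring

lemma closingDet_kernelMatrix_of_northEast_northWest (a : ℤ → ℤ → R) (c : R) (hne : a 1 1 = 0)
    (hnw : a (-1) 1 = 0) :
    closingDet (kernelMatrix a c) = a 0 1 ^ 2 *
      (-a 1 0 * a (-1) 0 * (a 0 (-1) * a 1 0 - c * a 1 (-1)) *
          (c * a (-1) (-1) - a (-1) 0 * a 0 (-1)) -
        a 0 1 * a 1 (-1) ^ 2 * a (-1) 0 * (c * a (-1) (-1) - a (-1) 0 * a 0 (-1)) +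
        a (-1) (-1) ^ 2 * a 0 1 * a 1 0 * (a 0 (-1) * a 1 0 - c * a 1 (-1)) +
        (a (-1) (-1) * a 1 0 - a (-1) 0 * a 1 (-1)) ^ 2 * a 1 0 * a (-1) 0 +
        (a 0 1 * a 1 (-1) * a (-1) (-1)) ^ 2) := by
  simp only [closingDet, det_catalecticant, adjugate_fin_three, kernelMatrix, of_apply, cons_val,
    hne, hnw]
  ring

lemma closingDet_kernelMatrix_of_northEast_southWest (a : ℤ → ℤ → R) (c A E F H : R)
    (hne : a 1 1 = 0) (hsw : a (-1) (-1) = 0) (hA : a (-1) 1 * a 1 (-1) = A)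
    (hE : a (-1) 0 * a 1 0 = E) (hF : a 0 1 * a 0 (-1) = F)
    (hH : a (-1) 1 * a 1 0 * a 0 (-1) + a 1 (-1) * a (-1) 0 * a 0 1 = H) :
    closingDet (kernelMatrix a c) = (E * F - c * H + c ^ 2 * A) * (E * F - A ^ 2) +
      (E + F - 2 * A) * (H ^ 2 - 2 * A * E * F - c * A * H) +
      A ^ 2 * ((E + F - A) ^ 2 - E * F) := by
  subst hA hE hF hH
  simp only [closingDet, det_catalecticant, adjugate_fin_three, kernelMatrix, of_apply, cons_val,
    hne, hsw]
  ring

variable {F : Type*} [Field F] [CharZero F]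

lemma corner_product_eq_zero {a : ℤ → ℤ → F} (h : ∀ c, closingDet (kernelMatrix a c) = 0) :
    a 1 1 * a (-1) 1 * a 1 (-1) * a (-1) (-1) = 0 := by
  have h₀ := h 0
  have h₁ := h 1
  have h₂ := h 2
  have h₃ := h (-1)
  have h₄ := h (-2)
  simp only [closingDet, det_catalecticant, adjugate_fin_three, kernelMatrix, of_apply, cons_val]
    at h₀ h₁ h₂ h₃ h₄
  -- The product is the coefficient of `c ^ 4`, hence a fourth difference divided by `4!`.
  linear_combination (h₂ + h₄ - 4 * h₁ - 4 * h₃ + 6 * h₀) / 24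

lemma boundary_product_eq_zero {a : ℤ → ℤ → F} (h : ∀ c, closingDet (kernelMatrix a c) = 0)
    (hne : a 1 1 = 0) : a 0 1 * a 1 0 * a (-1) 1 * a 1 (-1) * a (-1) (-1) = 0 := by
  have h₁ := h 1
  have h₂ := h 2
  have h₃ := h (-1)
  have h₄ := h (-2)
  simp only [closingDet, det_catalecticant, adjugate_fin_three, kernelMatrix, of_apply, cons_val,
    hne] at h₁ h₂ h₃ h₄
  -- When `a 1 1 = 0`, the determinant is cubic in `c` and its leading coefficient is minus the
  -- product.
  linear_combination -(h₂ - h₄ - 2 * h₁ + 2 * h₃) / 12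

lemma coeffs_eq_zero_of_forall_quadratic {p q r : F} (h : ∀ c, p * c ^ 2 + q * c + r = 0) :
    p = 0 ∧ q = 0 ∧ r = 0 :=
  ⟨by linear_combination (h 1 + h (-1)) / 2 - h 0, by linear_combination (h 1 - h (-1)) / 2,
    by linear_combination h 0⟩

end Coefficients

section Families

variable {a : ℤ → ℤ → ℂ}

lemma fam2a_of_northEast_east (hI : Interesting a) (h : ∀ c, closingDet (kernelMatrix a c) = 0)
    (hne : a 1 1 = 0) (he : a 1 0 = 0) : Fam2a a := by
  have hse : a 1 (-1) ≠ 0 := fun hse => hI.1 ⟨hse, he, hne⟩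
  simp only [closingDet_kernelMatrix_of_northEast_east a _ hne he, mul_eq_zero, pow_eq_zero_iff,
    ne_eq, OfNat.ofNat_ne_zero, not_false_eq_true, hse, false_or] at h
  obtain ⟨-, hI₂, hI₃, -⟩ := hI
  unfold Fam2a
  generalize a 0 1 = n, a 0 (-1) = s, a (-1) 0 = w, a (-1) 1 = nw, a 1 (-1) = se,
    a (-1) (-1) = sw at *
  obtain ⟨h₂, h₁, h₀⟩ := coeffs_eq_zero_of_forall_quadratic
    (p := nw * (n ^ 2 * sw - nw ^ 2 * se))
    (q := nw * w * n * (2 * (nw * se) - n * s) - w * n * (n ^ 2 * sw - nw ^ 2 * se))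
    (r := (n * nw * s - n ^ 2 * sw - nw ^ 2 * se) ^ 2 - (w * n) ^ 2 * (2 * (nw * se) - n * s))
    fun c => by linear_combination h c
  rcases eq_or_ne nw 0 with rfl | hnw
  · have hn : n ≠ 0 := by tauto
    have hsw : sw = 0 := by
      by_contra hsw
      have hw : w = 0 := by simpa [hn, hsw] using h₁
      simp [hw, hn, hsw] at h₀
    have hw : w ≠ 0 := by tauto
    have hs : s = 0 := by simpa [hsw, hw, hn] using h₀
    simp [hne, he, hsw, hs]
  · have hρ : n ^ 2 * sw = nw ^ 2 * se := sub_eq_zero.1 ((mul_eq_zero.1 h₂).resolve_left hnw)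
    have hn : n ≠ 0 := by
      rintro rfl
      simp [hnw, hse] at hρ
    have hw : w * (2 * (nw * se) - n * s) = 0 := by
      refine mul_left_cancel₀ (mul_ne_zero hnw hn) ?_
      linear_combination h₁ + w * n * hρ
    have hns : n * s = 2 * (nw * se) := by
      have hsq : (nw * (n * s - 2 * (nw * se))) ^ 2 = 0 := by
        linear_combination h₀ + w * n ^ 2 * hw +
          (2 * n * nw * s - n ^ 2 * sw - 3 * (nw ^ 2 * se)) * hρ
      simpa [hnw, sub_eq_zero] using hsq
    refine ⟨he, hne, ?_, ?_, by linear_combination hns⟩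
    · refine mul_left_cancel₀ hn ?_
      linear_combination nw * hns - 2 * hρ
    · refine mul_left_cancel₀ (pow_ne_zero 2 hn) ?_
      linear_combination (n * s + 2 * (nw * se)) * hns - 4 * se * hρ

lemma fam1a_of_northEast_southWest (h : ∀ c, closingDet (kernelMatrix a c) = 0)
    (hne : a 1 1 = 0) (hsw : a (-1) (-1) = 0) (hn : a 0 1 ≠ 0) (he : a 1 0 ≠ 0)
    (hs : a 0 (-1) ≠ 0) (hw : a (-1) 0 ≠ 0) : Fam1a a := by
  obtain ⟨A, hA⟩ : ∃ A, a (-1) 1 * a 1 (-1) = A := ⟨_, rfl⟩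
  obtain ⟨E, hE⟩ : ∃ E, a (-1) 0 * a 1 0 = E := ⟨_, rfl⟩
  obtain ⟨F, hF⟩ : ∃ F, a 0 1 * a 0 (-1) = F := ⟨_, rfl⟩
  obtain ⟨H, hH⟩ : ∃ H, a (-1) 1 * a 1 0 * a 0 (-1) + a 1 (-1) * a (-1) 0 * a 0 1 = H := ⟨_, rfl⟩
  obtain ⟨h₂, h₁, h₀⟩ := coeffs_eq_zero_of_forall_quadratic
    (p := A * (E * F - A ^ 2)) (q := -H * (E * F - A ^ 2) - (E + F - 2 * A) * (A * H))
    (r := E * F * (E * F - A ^ 2) + (E + F - 2 * A) * (H ^ 2 - 2 * A * E * F) +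
      A ^ 2 * ((E + F - A) ^ 2 - E * F)) fun c => by
    rw [← h c, closingDet_kernelMatrix_of_northEast_southWest a c A E F H hne hsw hA hE hF hH]
    ring
  have hE₀ : E ≠ 0 := hE ▸ mul_ne_zero hw he
  have hF₀ : F ≠ 0 := hF ▸ mul_ne_zero hn hs
  have hA₀ : A ≠ 0 := by
    rintro rfl
    have hH₀ : H = 0 := by simpa [hE₀, hF₀] using h₁
    simp [hH₀, hE₀, hF₀] at h₀
  have hEF : E * F = A ^ 2 := sub_eq_zero.1 ((mul_eq_zero.1 h₂).resolve_left hA₀)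
  have hsum : E + F = 2 * A := by
    by_contra hsum
    have hH₀ : H = 0 := by simpa [hEF, hA₀, sub_eq_zero, hsum] using h₁
    rw [hEF, hH₀] at h₀
    have hsq : A ^ 2 * (E + F - 2 * A) ^ 2 = 0 := by
      linear_combination h₀ + 2 * A * (E + F - 2 * A) * hEF
    simp [hA₀, sub_eq_zero, hsum] at hsq
  have hEA : E = A := by
    have hsq : (E - A) ^ 2 = 0 := by linear_combination E * hsum - hEF
    simpa [sub_eq_zero] using hsq
  exact ⟨hne, hsw, by rw [hA, hE, hEA], by rw [hE, hF]; linear_combination 2 * hEA - hsum⟩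

lemma fam1b_of_northEast_northWest (h : ∀ c, closingDet (kernelMatrix a c) = 0)
    (hne : a 1 1 = 0) (hnw : a (-1) 1 = 0) (hn : a 0 1 ≠ 0) (he : a 1 0 ≠ 0)
    (hsw : a (-1) (-1) ≠ 0) : Fam1b a := by
  simp only [closingDet_kernelMatrix_of_northEast_northWest a _ hne hnw, mul_eq_zero,
    pow_eq_zero_iff, ne_eq, OfNat.ofNat_ne_zero, not_false_eq_true, hn, false_or] at h
  unfold Fam1b
  generalize a 0 1 = n, a 1 0 = e, a 0 (-1) = s, a (-1) 0 = w, a 1 (-1) = se,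
    a (-1) (-1) = sw at *
  obtain ⟨h₂, h₁, h₀⟩ := coeffs_eq_zero_of_forall_quadratic
    (p := e * w * se * sw)
    (q := -e * w * (s * e * sw + se * w * s) - n * se ^ 2 * w * sw - sw ^ 2 * n * e * se)
    (r := e ^ 2 * w ^ 2 * s ^ 2 + n * se ^ 2 * w ^ 2 * s + sw ^ 2 * n * e ^ 2 * s +
      (sw * e - w * se) ^ 2 * e * w + (n * se * sw) ^ 2)
    fun c => by linear_combination h c
  rcases eq_or_ne w 0 with rfl | hw
  · have hse : se = 0 := by simpa [hsw, hn, he] using h₁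
    have hs : s = 0 := by simpa [hse, hsw, hn, he] using h₀
    simp [hnw, hne, hse, hs]
  · have hse : se = 0 := by simpa [he, hw, hsw] using h₂
    have hs : s = 0 := by simpa [he, hw, hsw, hse] using h₁
    simp [hse, hs, he, hw, hsw] at h₀

lemma Fam1a.closingDet_eq_zero (h : Fam1a a) (c : ℂ) : closingDet (kernelMatrix a c) = 0 := by
  obtain ⟨hne, hsw, hAE, hEF⟩ := h
  rw [closingDet_kernelMatrix_of_northEast_southWest a c _ _ _ _ hne hsw hAE rfl hEF.symm rfl]
  ring

lemma Fam2a.closingDet_eq_zero (h : Fam2a a) (c : ℂ) : closingDet (kernelMatrix a c) = 0 := by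
  obtain ⟨he, hne, h₁, -, h₃⟩ := h
  have hρ : a 0 1 ^ 2 * a (-1) (-1) - a (-1) 1 ^ 2 * a 1 (-1) = 0 := by
    linear_combination (a (-1) 1 * h₃ - a 0 1 * h₁) / 2
  have hκ : a 0 1 * a (-1) 1 * a 0 (-1) - a 0 1 ^ 2 * a (-1) (-1) -
      a (-1) 1 ^ 2 * a 1 (-1) = 0 := by
    linear_combination a 0 1 * h₁ + hρ
  have hτ : 2 * (a (-1) 1 * a 1 (-1)) - a 0 1 * a 0 (-1) = 0 := by linear_combination -h₃
  rw [closingDet_kernelMatrix_of_northEast_east a c hne he, hκ, hρ, hτ]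
  ring

end Families

section Symmetry

variable {a : ℤ → ℤ → ℂ}

lemma fam1a_flipX_iff : Fam1a (flipX a) ↔ Fam1b a := by
  simp only [Fam1a, Fam1b, flipX, neg_neg, neg_zero]
  grind

lemma fam1a_flipY_iff : Fam1a (flipY a) ↔ Fam1b a := by
  simp only [Fam1a, Fam1b, flipY, neg_neg, neg_zero]
  grind

lemma fam2a_flipX_iff : Fam2a (flipX a) ↔ Fam3b a := by
  simp [Fam2a, Fam3b, flipX, mul_comm]

lemma fam2a_flipY_iff : Fam2a (flipY a) ↔ Fam2b a := by
  simp [Fam2a, Fam2b, flipY, mul_comm]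

lemma fam2a_flipX_flipY_iff : Fam2a (flipX (flipY a)) ↔ Fam3a a := by
  simp [Fam2a, Fam3a, flipX, flipY, mul_comm]

/-- The model satisfies one of the six systems 1a–3b, before the diagonal reflection. -/
def InFamily (a : ℤ → ℤ → ℂ) : Prop :=
  Fam1a a ∨ Fam1b a ∨ Fam2a a ∨ Fam2b a ∨ Fam3a a ∨ Fam3b a

lemma inFamily_iff : InFamily a ↔ Fam1a a ∨ Fam1a (flipX a) ∨ Fam2a a ∨ Fam2a (flipY a) ∨
    Fam2a (flipX (flipY a)) ∨ Fam2a (flipX a) := by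
  rw [fam1a_flipX_iff, fam2a_flipY_iff, fam2a_flipX_flipY_iff, fam2a_flipX_iff, InFamily]

lemma inFamily_flipX_iff : InFamily (flipX a) ↔ InFamily a := by
  simp only [inFamily_iff, flipX_flipX, flipY_flipX]
  tauto

lemma inFamily_flipY_iff : InFamily (flipY a) ↔ InFamily a := by
  have h : Fam1a (flipX (flipY a)) ↔ Fam1a a := by
    rw [fam1a_flipX_iff, ← fam1a_flipY_iff, flipY_flipY]
  simp only [inFamily_iff, flipY_flipY, h, fam1a_flipY_iff, fam1a_flipX_iff]
  tauto

lemma InFamily.closingDet_eq_zero (h : InFamily a) (c : ℂ) : closingDet (kernelMatrix a c) = 0 := by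
  rcases inFamily_iff.1 h with h | h | h | h | h | h <;>
    simpa only [closingDet_kernelMatrix_flipX, closingDet_kernelMatrix_flipY] using
      h.closingDet_eq_zero c

/-- The model, or its reflection in the diagonal, satisfies one of the systems 1a–3b. -/
def InFamilyUpToTransp (a : ℤ → ℤ → ℂ) : Prop :=
  InFamily a ∨ InFamily (transp a)

lemma inFamilyUpToTransp_flipX_iff : InFamilyUpToTransp (flipX a) ↔ InFamilyUpToTransp a :=
  or_congr inFamily_flipX_iff (inFamily_flipY_iff (a := transp a))

lemma inFamilyUpToTransp_flipY_iff : InFamilyUpToTransp (flipY a) ↔ InFamilyUpToTransp a :=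
  or_congr inFamily_flipY_iff (inFamily_flipX_iff (a := transp a))

end Symmetry

section Classification

variable {a : ℤ → ℤ → ℂ}

lemma inFamilyUpToTransp_of_northEast (hI : Interesting a)
    (h : ∀ c, closingDet (kernelMatrix a c) = 0) (hne : a 1 1 = 0) : InFamilyUpToTransp a := by
  have hT : ∀ c, closingDet (kernelMatrix (transp a) c) = 0 := by
    simpa only [closingDet_kernelMatrix_transp] using h
  have hXY : ∀ c, closingDet (kernelMatrix (flipX (flipY a)) c) = 0 := by
    simpa only [closingDet_kernelMatrix_flipX, closingDet_kernelMatrix_flipY] using h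
  have hXYT : ∀ c, closingDet (kernelMatrix (flipX (flipY (transp a))) c) = 0 := by
    simpa only [closingDet_kernelMatrix_flipX, closingDet_kernelMatrix_flipY] using hT
  by_cases he : a 1 0 = 0
  · exact .inl <| inFamily_iff.2 <| by
      simp only [fam2a_of_northEast_east hI h hne he, true_or, or_true]
  by_cases hn : a 0 1 = 0
  · exact .inr <| inFamily_iff.2 <| by
      simp only [fam2a_of_northEast_east hI.transp hT hne hn, true_or, or_true]
  by_cases hsw : a (-1) (-1) = 0
  · by_cases hw : a (-1) 0 = 0
    · exact .inl <| inFamily_iff.2 <| by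
        simp only [fam2a_of_northEast_east hI.flipY.flipX hXY hsw hw, true_or, or_true]
    by_cases hs : a 0 (-1) = 0
    · exact .inr <| inFamily_iff.2 <| by
        simp only [fam2a_of_northEast_east hI.transp.flipY.flipX hXYT hsw hs, true_or, or_true]
    exact .inl (.inl (fam1a_of_northEast_southWest h hne hsw hn he hs hw))
  by_cases hnw : a (-1) 1 = 0
  · exact .inl (.inr (.inl (fam1b_of_northEast_northWest h hne hnw hn he hsw)))
  · have hse : a 1 (-1) = 0 := by
      simpa [hn, he, hnw, hsw] using boundary_product_eq_zero h hne
    exact .inr (.inr (.inl (fam1b_of_northEast_northWest hT hne hse he hn hsw)))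

theorem forall_closingDet_eq_zero_iff (hI : Interesting a) :
    (∀ c, closingDet (kernelMatrix a c) = 0) ↔ InFamilyUpToTransp a := by
  constructor
  · intro h
    have hX : ∀ c, closingDet (kernelMatrix (flipX a) c) = 0 := by
      simpa only [closingDet_kernelMatrix_flipX] using h
    have hY : ∀ c, closingDet (kernelMatrix (flipY a) c) = 0 := by
      simpa only [closingDet_kernelMatrix_flipY] using h
    have hXY : ∀ c, closingDet (kernelMatrix (flipX (flipY a)) c) = 0 := by
      simpa only [closingDet_kernelMatrix_flipX] using hY
    have hcorners := corner_product_eq_zero h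
    simp only [mul_eq_zero] at hcorners
    rcases hcorners with ((hne | hnw) | hse) | hsw
    · exact inFamilyUpToTransp_of_northEast hI h hne
    · exact inFamilyUpToTransp_flipX_iff.1 (inFamilyUpToTransp_of_northEast hI.flipX hX hnw)
    · exact inFamilyUpToTransp_flipY_iff.1 (inFamilyUpToTransp_of_northEast hI.flipY hY hse)
    · exact inFamilyUpToTransp_flipY_iff.1 (inFamilyUpToTransp_flipX_iff.1
        (inFamilyUpToTransp_of_northEast hI.flipY.flipX hXY hsw))
  · rintro (h | h) c
    · exact h.closingDet_eq_zero c
    · rw [← closingDet_kernelMatrix_transp]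
      exact h.closingDet_eq_zero c

end Classification

end

theorem statement6 (a : ℤ → ℤ → ℂ) (hInt : Interesting a)
    (Φ Ψ : RF →ₐ[ℂ] RF)
    (hΦx : Φ Xr = Xr⁻¹ *
      ((Cr (a (-1) (-1)) * Yr⁻¹ + Cr (a (-1) 0) + Cr (a (-1) 1) * Yr) /
        (Cr (a 1 (-1)) * Yr⁻¹ + Cr (a 1 0) + Cr (a 1 1) * Yr)))
    (hΦy : Φ Yr = Yr)
    (hΨx : Ψ Xr = Xr)
    (hΨy : Ψ Yr = Yr⁻¹ *
      ((Cr (a (-1) (-1)) * Xr⁻¹ + Cr (a 0 (-1)) + Cr (a 1 (-1)) * Xr) /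
        (Cr (a (-1) 1) * Xr⁻¹ + Cr (a 0 1) + Cr (a 1 1) * Xr))) :
    (Φ.comp Ψ).comp ((Φ.comp Ψ).comp (Φ.comp Ψ)) = AlgHom.id ℂ RF ↔
      (Fam1a a ∨ Fam1b a ∨ Fam2a a ∨ Fam2b a ∨ Fam3a a ∨ Fam3b a ∨
       Fam1a (fun u v => a v u) ∨ Fam1b (fun u v => a v u) ∨
       Fam2a (fun u v => a v u) ∨ Fam2b (fun u v => a v u) ∨
       Fam3a (fun u v => a v u) ∨ Fam3b (fun u v => a v u)) := by
  have hXY := biquadraticallyIndependent_Xr_Yr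
  have hΦ := hXY.isRootSwitch hInt hΦx hΦy
  have hΨ := hXY.isRootSwitch_transpose hInt hΨx hΨy
  rw [comp_pow_three_eq_id_iff_closingDet_eq_zero hΦ hΨ,
    closingDet_kernelMatrix_eq_zero_iff (hXY.transcendental_neg_stepSum hInt),
    forall_closingDet_eq_zero_iff hInt]
  simp only [InFamilyUpToTransp, InFamily, or_assoc]
  rfl

end
end

section
/- Let (a_{u,v}) be a model of family 1b with all six relevant multiplicities nonzero: a_{1,-1}=a_{-1,1}=0, a_{-1,0}a_{1,0}=a_{-1,-1}a_{1,1}=a_{0,-1}a_{0,1}, and a_{1,1}, a_{-1,-1}, a_{1,0}, a_{-1,0}, a_{0,1}, a_{0,-1} all nonzero. Put λ = a_{0,1}a_{1,0}²/(a_{0,-1}a_{1,1}²), and let (f^λ_{i,j,n}) be the counting array of the model M_λ with a_{-1,-1}=a_{-1,0}=a_{0,-1}=1, a_{1,1}=a_{1,0}=a_{0,1}=λ, and a_{1,-1}=a_{-1,1}=0. Then for all i,j,n ≥ 0: f_{i,j,n} = (a_{1,1}/a_{0,1})^i · (a_{1,1}/a_{1,0})^j · (a_{-1,-1}a_{1,1}²/(a_{0,1}a_{1,0}))^n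 · f^λ_{i,j,n}. -/
/- STATEMENT 10: A model of family 1b with all six relevant multiplicities nonzero
reduces by an algebraic substitution to the one-parameter model M_λ with
a_{-1,-1}=a_{-1,0}=a_{0,-1}=1 and a_{1,1}=a_{1,0}=a_{0,1}=λ. -/

noncomputable section

/-- The counting array (f_{i,j,n}) of a quarter-plane model with multiplicities `a`. -/
def IsCountingArray (a : ℤ → ℤ → ℂ) (f : ℤ → ℤ → ℕ → ℂ) : Prop :=
  f 0 0 0 = 1 ∧
  (∀ i j : ℤ, ¬(i = 0 ∧ j = 0) → f i j 0 = 0) ∧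
  (∀ (i j : ℤ) (n : ℕ), i < 0 ∨ j < 0 → f i j n = 0) ∧
  (∀ (i j : ℤ) (n : ℕ), 0 ≤ i → 0 ≤ j →
    f i j (n + 1) =
      a (-1) (-1) * f (i + 1) (j + 1) n + a (-1) 0 * f (i + 1) j n +
      a (-1) 1 * f (i + 1) (j - 1) n + a 0 (-1) * f i (j + 1) n +
      a 0 1 * f i (j - 1) n + a 1 (-1) * f (i - 1) (j + 1) n +
      a 1 0 * f (i - 1) j n + a 1 1 * f (i - 1) (j - 1) n)

/-- The model M_λ: steps ↙, ←, ↓ with multiplicity 1 and ↗, →, ↑ with multiplicity λ. -/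
def Mmodel (l : ℂ) : ℤ → ℤ → ℂ := fun u v =>
  if (u = -1 ∧ v = -1) ∨ (u = -1 ∧ v = 0) ∨ (u = 0 ∧ v = -1) then 1
  else if (u = 1 ∧ v = 1) ∨ (u = 1 ∧ v = 0) ∨ (u = 0 ∧ v = 1) then l
  else 0

/-!
Weighting the step `(u, v)` by `t * x ^ u * y ^ v` multiplies the weight of every `n`-step walk
from the origin to `(i, j)` by `x ^ i * y ^ j * t ^ n`. In family 1b the multiplicities of opposite
steps have a common product, whereas weighting multiplies such a product by `t ^ 2` whatever `x` and
`y` are. The steps `↙`, `←`, `↓` therefore determine `x`, `y`, `t`, the common product determines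
`λ`, and the steps `↗`, `→`, `↑` then match automatically.
-/

/-- The eight directions `{-1, 0, 1}² \ {(0, 0)}` of a quarter-plane model. -/
def steps : Finset (ℤ × ℤ) :=
  (Finset.Icc (-1) 1 ×ˢ Finset.Icc (-1) 1).erase (0, 0)

lemma steps_eq :
    steps = {(-1, -1), (-1, 0), (-1, 1), (0, -1), (0, 1), (1, -1), (1, 0), (1, 1)} := by
  decide

/-- The central weighting of the model `a` with parameters `x`, `y`, `t`: it changes the weight of
a walk by a factor that depends only on the length and the endpoints of the walk. -/
def centralWeighting (x y t : ℂ) (a : ℤ → ℤ → ℂ) : ℤ → ℤ → ℂ := fun u v =>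
  t * x ^ u * y ^ v * a u v

section CountingArray

variable {a b : ℤ → ℤ → ℂ} {F G : ℤ → ℤ → ℕ → ℂ}

lemma isCountingArray_iff_sum_steps :
    IsCountingArray a F ↔
      F 0 0 0 = 1 ∧
      (∀ i j : ℤ, ¬(i = 0 ∧ j = 0) → F i j 0 = 0) ∧
      (∀ (i j : ℤ) (n : ℕ), i < 0 ∨ j < 0 → F i j n = 0) ∧
      (∀ (i j : ℤ) (n : ℕ), 0 ≤ i → 0 ≤ j →
        F i j (n + 1) = ∑ s ∈ steps, a s.1 s.2 * F (i - s.1) (j - s.2) n) := by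
  simp [IsCountingArray, steps_eq, add_assoc]

theorem IsCountingArray.eq_of_eq_on_steps (hF : IsCountingArray a F) (hG : IsCountingArray b G)
    (hab : ∀ s ∈ steps, a s.1 s.2 = b s.1 s.2) : F = G := by
  obtain ⟨hF_origin, hF_zero, hF_neg, hF_succ⟩ := isCountingArray_iff_sum_steps.mp hF
  obtain ⟨hG_origin, hG_zero, hG_neg, hG_succ⟩ := isCountingArray_iff_sum_steps.mp hG
  ext i j n
  induction n generalizing i j with
  | zero =>
    by_cases hij : i = 0 ∧ j = 0
    · rw [hij.1, hij.2, hF_origin, hG_origin]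
    · rw [hF_zero i j hij, hG_zero i j hij]
  | succ n ih =>
    by_cases hij : i < 0 ∨ j < 0
    · rw [hF_neg i j _ hij, hG_neg i j _ hij]
    · obtain ⟨hi, hj⟩ : 0 ≤ i ∧ 0 ≤ j := by simpa only [not_or, not_lt] using hij
      rw [hF_succ i j n hi hj, hG_succ i j n hi hj]
      exact Finset.sum_congr rfl fun s hs => by rw [hab s hs, ih]

theorem isCountingArray_centralWeighting {x y : ℂ} (hF : IsCountingArray a F) (hx : x ≠ 0)
    (hy : y ≠ 0) (t : ℂ) :
    IsCountingArray (centralWeighting x y t a)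
      (fun i j n => x ^ i * y ^ j * t ^ n * F i j n) := by
  obtain ⟨h_origin, h_zero, h_neg, h_succ⟩ := isCountingArray_iff_sum_steps.mp hF
  refine isCountingArray_iff_sum_steps.mpr ⟨by simp [h_origin], fun i j hij => ?_,
    fun i j n hij => ?_, fun i j n hi hj => ?_⟩
  · rw [h_zero i j hij, mul_zero]
  · rw [h_neg i j n hij, mul_zero]
  · rw [h_succ i j n hi hj, Finset.mul_sum]
    refine Finset.sum_congr rfl fun ⟨u, v⟩ _ => ?_
    have hxu : x ^ i = x ^ u * x ^ (i - u) := by rw [← zpow_add₀ hx, add_sub_cancel]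
    have hyv : y ^ j = y ^ v * y ^ (j - v) := by rw [← zpow_add₀ hy, add_sub_cancel]
    simp only [centralWeighting, hxu, hyv]
    ring

end CountingArray

theorem eq_centralWeighting_mmodel {a : ℤ → ℤ → ℂ} {x y t l : ℂ}
    (hx : x ≠ 0) (hy : y ≠ 0) (ht : t ≠ 0)
    (h_southeast : a 1 (-1) = 0) (h_northwest : a (-1) 1 = 0)
    (h_southwest : a (-1) (-1) = t * x⁻¹ * y⁻¹)
    (h_west : a (-1) 0 = t * x⁻¹) (h_south : a 0 (-1) = t * y⁻¹)
    (h_diagonal : a (-1) (-1) * a 1 1 = t ^ 2 * l)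
    (h_horizontal : a (-1) 0 * a 1 0 = t ^ 2 * l)
    (h_vertical : a 0 (-1) * a 0 1 = t ^ 2 * l) :
    ∀ s ∈ steps, a s.1 s.2 = centralWeighting x y t (Mmodel l) s.1 s.2 := by
  have h_northeast : a 1 1 = t * x * y * l := by
    rw [h_southwest] at h_diagonal
    field_simp at h_diagonal
    linear_combination h_diagonal
  have h_east : a 1 0 = t * x * l := by
    rw [h_west] at h_horizontal
    field_simp at h_horizontal
    linear_combination h_horizontal
  have h_north : a 0 1 = t * y * l := by
    rw [h_south] at h_vertical
    field_simp at h_vertical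
    linear_combination h_vertical
  simp [steps_eq, centralWeighting, Mmodel, h_southeast, h_northwest, h_southwest, h_west, h_south,
    h_northeast, h_east, h_north]

theorem statement10 (a : ℤ → ℤ → ℂ)
    (hz1 : a 1 (-1) = 0) (hz2 : a (-1) 1 = 0)
    (he1 : a (-1) 0 * a 1 0 = a (-1) (-1) * a 1 1)
    (he2 : a (-1) (-1) * a 1 1 = a 0 (-1) * a 0 1)
    (hn1 : a 1 1 ≠ 0) (hn2 : a (-1) (-1) ≠ 0) (hn3 : a 1 0 ≠ 0)
    (hn4 : a (-1) 0 ≠ 0) (hn5 : a 0 1 ≠ 0) (hn6 : a 0 (-1) ≠ 0)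
    (F G : ℤ → ℤ → ℕ → ℂ)
    (hF : IsCountingArray a F)
    (hG : IsCountingArray (Mmodel (a 0 1 * a 1 0 ^ 2 / (a 0 (-1) * a 1 1 ^ 2))) G) :
    ∀ i j n : ℕ,
      F i j n = (a 1 1 / a 0 1) ^ i * (a 1 1 / a 1 0) ^ j *
        (a (-1) (-1) * a 1 1 ^ 2 / (a 0 1 * a 1 0)) ^ n * G i j n := by
  have hx : a 1 1 / a 0 1 ≠ 0 := div_ne_zero hn1 hn5
  have hy : a 1 1 / a 1 0 ≠ 0 := div_ne_zero hn1 hn3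
  have ht : a (-1) (-1) * a 1 1 ^ 2 / (a 0 1 * a 1 0) ≠ 0 := by positivity
  have h_product : a (-1) (-1) * a 1 1 = (a (-1) (-1) * a 1 1 ^ 2 / (a 0 1 * a 1 0)) ^ 2 *
      (a 0 1 * a 1 0 ^ 2 / (a 0 (-1) * a 1 1 ^ 2)) := by
    field_simp
    linear_combination -he2
  have h_steps := eq_centralWeighting_mmodel hx hy ht hz1 hz2
    (by field_simp) (by field_simp; exact he1) (by field_simp; exact he2.symm)
    h_product (he1.trans h_product) (he2.symm.trans h_product)
  intro i j n
  rw [hF.eq_of_eq_on_steps (isCountingArray_centralWeighting hG hx hy _) h_steps]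
  simp only [zpow_natCast]

end
end

section
/- Let (a_{u,v}) be a model of family 4b, i.e., a_{1,-1}=a_{0,1}=a_{0,-1}=a_{-1,1}=0 and a_{1,1}a_{-1,-1}=a_{1,0}a_{-1,0}, with a_{1,0}, a_{-1,0}, a_{1,1}, a_{-1,-1} all nonzero, and let (g_{i,j,n}) be the counting array of the Gessel model (the model with a_{1,0}=a_{-1,0}=a_{1,1}=a_{-1,-1}=1 and all other multiplicities 0). Then for any s, r ∈ ℂ with s·r = a_{1,0} and r = s·a_{-1,0} (such pairs exist: take r² = a_{1,0}a_{-1,0}), one has f_{i,j,n} = s^i · (a_{1,1}/a_{1,0})^j · r^n · g_{i,j,n} for all i,j,n ≥ 0; equivalently f(x,y,t) = g(s·x, (a_{1,1}/a_{1,0})·y, r·t). -/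
/- STATEMENT 18: A model of family 4b with the four multiplicities nonzero reduces to
the Gessel model via f_{i,j,n} = s^i (a_{1,1}/a_{1,0})^j r^n g_{i,j,n}, for any s, r
with s·r = a_{1,0} and r = s·a_{-1,0}. -/

noncomputable section

/-- The Gessel model: steps →, ←, ↗, ↙ with multiplicity 1. -/
def gesselModel : ℤ → ℤ → ℂ := fun u v =>
  if (u = 1 ∧ v = 0) ∨ (u = -1 ∧ v = 0) ∨ (u = 1 ∧ v = 1) ∨ (u = -1 ∧ v = -1) then 1
  else 0

/-! If every step `(u, v)` is weighted by `r * s ^ u * q ^ v`, then the exponents add up along a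
walk, so all walks of `n` steps from the origin to `(i, j)` are weighted by the same factor
`s ^ i * q ^ j * r ^ n`. In family 4b the relation between the four nonzero multiplicities says
exactly that they are such weights: `q = a₁₁ / a₁₀`, while `r * s = a₁₀` and `r / s = a₋₁₀`. -/

/-- The eight directions `{-1, 0, 1}² \ {(0, 0)}` in which a quarter-plane model may step. -/
def smallSteps : Finset (ℤ × ℤ) := (Finset.Icc (-1) 1).erase 0

/-- The model obtained from `a` by weighting the step `(u, v)` with `r * s ^ u * q ^ v`. On
generating functions this is the substitution `f(x, y, t) ↦ f(s x, q y, r t)`. -/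
def rescaleModel (s q r : ℂ) (a : ℤ → ℤ → ℂ) : ℤ → ℤ → ℂ :=
  fun u v => r * s ^ u * q ^ v * a u v

/-- The defining equations of family 4b, without the non-vanishing of the other four
multiplicities; `zero_` fields are named after the compass directions of the steps. -/
structure IsFamily4b (a : ℤ → ℤ → ℂ) : Prop where
  zero_southeast : a 1 (-1) = 0
  zero_north : a 0 1 = 0
  zero_south : a 0 (-1) = 0
  zero_northwest : a (-1) 1 = 0
  northeast_mul_southwest : a 1 1 * a (-1) (-1) = a 1 0 * a (-1) 0

lemma smallSteps_eq :
    smallSteps =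
      {(-1, -1), (-1, 0), (-1, 1), (0, -1), (0, 1), (1, -1), (1, 0), (1, 1)} := by
  decide

lemma sum_smallSteps {M : Type*} [AddCommMonoid M] (g : ℤ × ℤ → M) :
    ∑ p ∈ smallSteps, g p =
      g (-1, -1) + g (-1, 0) + g (-1, 1) + g (0, -1) +
      g (0, 1) + g (1, -1) + g (1, 0) + g (1, 1) := by
  simp [smallSteps_eq, ← add_assoc]

lemma isCountingArray_iff_sum {a : ℤ → ℤ → ℂ} {f : ℤ → ℤ → ℕ → ℂ} :
    IsCountingArray a f ↔
      f 0 0 0 = 1 ∧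
      (∀ i j : ℤ, ¬(i = 0 ∧ j = 0) → f i j 0 = 0) ∧
      (∀ (i j : ℤ) (n : ℕ), i < 0 ∨ j < 0 → f i j n = 0) ∧
      (∀ (i j : ℤ) (n : ℕ), 0 ≤ i → 0 ≤ j →
        f i j (n + 1) = ∑ p ∈ smallSteps, a p.1 p.2 * f (i - p.1) (j - p.2) n) := by
  simp only [IsCountingArray, sum_smallSteps, sub_neg_eq_add, sub_zero]

namespace IsCountingArray

variable {a b : ℤ → ℤ → ℂ} {f g : ℤ → ℤ → ℕ → ℂ}

theorem eq_of_eqOn_smallSteps (hf : IsCountingArray a f) (hg : IsCountingArray b g)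
    (hab : ∀ p ∈ smallSteps, a p.1 p.2 = b p.1 p.2) : f = g := by
  obtain ⟨hf_origin, hf_zero, hf_neg, hf_succ⟩ := isCountingArray_iff_sum.mp hf
  obtain ⟨hg_origin, hg_zero, hg_neg, hg_succ⟩ := isCountingArray_iff_sum.mp hg
  ext i j n
  induction n generalizing i j with
  | zero =>
    by_cases h : i = 0 ∧ j = 0
    · rw [h.1, h.2, hf_origin, hg_origin]
    · rw [hf_zero i j h, hg_zero i j h]
  | succ n ih =>
    by_cases h : i < 0 ∨ j < 0
    · rw [hf_neg i j _ h, hg_neg i j _ h]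
    · push Not at h
      rw [hf_succ i j n h.1 h.2, hg_succ i j n h.1 h.2]
      exact Finset.sum_congr rfl fun p hp => by rw [hab p hp, ih]

theorem rescale (hf : IsCountingArray a f) {s q : ℂ} (hs : s ≠ 0) (hq : q ≠ 0) (r : ℂ) :
    IsCountingArray (rescaleModel s q r a) fun i j n => s ^ i * q ^ j * r ^ n * f i j n := by
  obtain ⟨hf_origin, hf_zero, hf_neg, hf_succ⟩ := isCountingArray_iff_sum.mp hf
  refine isCountingArray_iff_sum.mpr
    ⟨by simp [hf_origin], fun i j h => by simp [hf_zero i j h],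
      fun i j n h => by simp [hf_neg i j n h], fun i j n hi hj => ?_⟩
  simp only [hf_succ i j n hi hj, Finset.mul_sum]
  refine Finset.sum_congr rfl fun p _ => ?_
  have hs_split : s ^ p.1 * s ^ (i - p.1) = s ^ i := by rw [← zpow_add₀ hs, add_sub_cancel]
  have hq_split : q ^ p.2 * q ^ (j - p.2) = q ^ j := by rw [← zpow_add₀ hq, add_sub_cancel]
  rw [rescaleModel, ← hs_split, ← hq_split]
  ring

end IsCountingArray

lemma IsFamily4b.eq_rescaleModel_gesselModel {a : ℤ → ℤ → ℂ} (ha : IsFamily4b a)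
    (h_east : a 1 0 ≠ 0) (h_northeast : a 1 1 ≠ 0)
    {s r : ℂ} (hsr : s * r = a 1 0) (hr : r = s * a (-1) 0) :
    ∀ p ∈ smallSteps, a p.1 p.2 = rescaleModel s (a 1 1 / a 1 0) r gesselModel p.1 p.2 := by
  have hs : s ≠ 0 := left_ne_zero_of_mul (hsr ▸ h_east)
  have east : a 1 0 = r * s := by rw [← hsr, mul_comm]
  have west : a (-1) 0 = r * s⁻¹ := by rw [hr, mul_comm s, mul_inv_cancel_right₀ hs]
  have northeast : a 1 1 = a 1 0 * (a 1 1 / a 1 0) := (mul_div_cancel₀ _ h_east).symm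
  have southwest : a (-1) (-1) = a (-1) 0 * (a 1 0 / a 1 1) := by
    rw [← mul_div_assoc, eq_div_iff h_northeast, mul_comm, ha.northeast_mul_southwest, mul_comm]
  simp only [smallSteps_eq, Finset.forall_mem_insert, Finset.mem_singleton, forall_eq]
  simp [rescaleModel, gesselModel, ha.zero_southeast, ha.zero_north, ha.zero_south,
    ha.zero_northwest, ← east, ← west, ← northeast, ← southwest]

lemma exists_mul_eq_and_eq_mul {K : Type*} [Field K] [IsAlgClosed K] (x : K) {y : K}
    (hy : y ≠ 0) : ∃ s r : K, s * r = x ∧ r = s * y := by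
  obtain ⟨s, hs⟩ := IsAlgClosed.exists_pow_nat_eq (x / y) two_pos
  exact ⟨s, s * y, by rw [← mul_assoc, ← sq, hs, div_mul_cancel₀ _ hy], rfl⟩

theorem statement18 (a : ℤ → ℤ → ℂ)
    (hz1 : a 1 (-1) = 0) (hz2 : a 0 1 = 0) (hz3 : a 0 (-1) = 0) (hz4 : a (-1) 1 = 0)
    (he : a 1 1 * a (-1) (-1) = a 1 0 * a (-1) 0)
    (hn1 : a 1 0 ≠ 0) (hn2 : a (-1) 0 ≠ 0) (hn3 : a 1 1 ≠ 0) (hn4 : a (-1) (-1) ≠ 0)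
    (F G : ℤ → ℤ → ℕ → ℂ)
    (hF : IsCountingArray a F) (hG : IsCountingArray gesselModel G) :
    (∃ s r : ℂ, s * r = a 1 0 ∧ r = s * a (-1) 0) ∧
    ∀ s r : ℂ, s * r = a 1 0 → r = s * a (-1) 0 →
      ∀ i j n : ℕ, F i j n = s ^ i * (a 1 1 / a 1 0) ^ j * r ^ n * G i j n := by
  refine ⟨exists_mul_eq_and_eq_mul (a 1 0) hn2, fun s r hsr hr i j n => ?_⟩
  have hs : s ≠ 0 := left_ne_zero_of_mul (hsr ▸ hn1)
  have ha : IsFamily4b a := ⟨hz1, hz2, hz3, hz4, he⟩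
  have hFG := hF.eq_of_eqOn_smallSteps (hG.rescale hs (div_ne_zero hn3 hn1) r)
    (ha.eq_rescaleModel_gesselModel hn1 hn3 hsr hr)
  simp only [hFG, zpow_natCast]

end
end
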